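/- arXiv:1205.5906 — 5 statements merged into one kernel-verified Lean document; each statement's English description precedes it below -/
import Mathlib

section
/- Let μ₁ be a probability measure on a measurable space Ω, let L : Ω → ℝ be measurable, let μ₀ := μ₁.withDensity (fun ω => ENNReal.ofReal (Real.exp (−L ω))), and let A ∈ ℝ, Θ ≥ 0. Suppose for μ₁-almost every ω in the event E := {ω | A ≤ L ω} one has L ω ≤ A + Θ. Set α := (μ₀ E).toReal and p := (μ₁ E).toReal, and assume α > 0 and p > 0. Then A ≤ Real.log (p / α) ≤ A + Θ. -/
open MeasureTheory

/-- If `L ≥ a` almost everywhere on `E`, then the measure with density `exp (-L)` gives `E` mass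
at most `exp (-a) * μ E`. -/
theorem withDensity_exp_neg_apply_le {Ω : Type*} [MeasurableSpace Ω] {μ : Measure Ω}
    {L : Ω → ℝ} {E : Set Ω} (hE : MeasurableSet E) {a : ℝ} (h : ∀ᵐ ω ∂μ, ω ∈ E → a ≤ L ω) :
    μ.withDensity (fun ω => ENNReal.ofReal (Real.exp (-L ω))) E
      ≤ ENNReal.ofReal (Real.exp (-a)) * μ E := by
  rw [withDensity_apply _ hE, ← setLIntegral_const]
  refine setLIntegral_mono_ae' hE ?_
  filter_upwards [h] with ω hω hωE
  gcongr
  exact hω hωE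

/-- If `L ≤ b` almost everywhere on `E`, then the measure with density `exp (-L)` gives `E` mass
at least `exp (-b) * μ E`. -/
theorem le_withDensity_exp_neg_apply {Ω : Type*} [MeasurableSpace Ω] {μ : Measure Ω}
    {L : Ω → ℝ} {E : Set Ω} (hE : MeasurableSet E) {b : ℝ} (h : ∀ᵐ ω ∂μ, ω ∈ E → L ω ≤ b) :
    ENNReal.ofReal (Real.exp (-b)) * μ E
      ≤ μ.withDensity (fun ω => ENNReal.ofReal (Real.exp (-L ω))) E := by
  rw [withDensity_apply _ hE, ← setLIntegral_const]
  refine setLIntegral_mono_ae' hE ?_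
  filter_upwards [h] with ω hω hωE
  gcongr
  exact hω hωE

/-- Key quantitative step in Lemma 1: with overshoot bounded by `Θ` on the stopping region
`E = {L ≥ A}`, the false-alarm probability `α = μ₀(E)` and detection probability
`p = μ₁(E)` satisfy `A ≤ log(p/α) ≤ A + Θ`. -/
theorem sprt_threshold_asymptotics {Ω : Type*} [MeasurableSpace Ω]
    (μ₁ : Measure Ω) [IsProbabilityMeasure μ₁] (L : Ω → ℝ) (hL : Measurable L)
    (μ₀ : Measure Ω)
    (hμ₀ : μ₀ = μ₁.withDensity (fun ω => ENNReal.ofReal (Real.exp (-L ω))))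
    (A Θ : ℝ) (hΘ : 0 ≤ Θ) (E : Set Ω) (hE : E = {ω | A ≤ L ω})
    (hover : ∀ᵐ ω ∂μ₁, ω ∈ E → L ω ≤ A + Θ)
    (α p : ℝ) (hα : α = (μ₀ E).toReal) (hp : p = (μ₁ E).toReal)
    (hαpos : 0 < α) (hppos : 0 < p) :
    A ≤ Real.log (p / α) ∧ Real.log (p / α) ≤ A + Θ := by
  have hEm : MeasurableSet E := hE ▸ measurableSet_le measurable_const hL
  have hα_top : μ₀ E ≠ ⊤ := fun h => by simp [hα, h] at hαpos
  have upper : α ≤ Real.exp (-A) * p := by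
    have h := withDensity_exp_neg_apply_le (μ := μ₁) (L := L) hEm (a := A)
      (.of_forall fun ω hω => by simpa [hE] using hω)
    rw [← hμ₀] at h
    have := ENNReal.toReal_mono (by finiteness) h
    rwa [ENNReal.toReal_mul, ENNReal.toReal_ofReal (Real.exp_nonneg _), ← hα, ← hp] at this
  have lower : Real.exp (-(A + Θ)) * p ≤ α := by
    have h := le_withDensity_exp_neg_apply hEm hover
    rw [← hμ₀] at h
    have := ENNReal.toReal_mono hα_top h
    rwa [ENNReal.toReal_mul, ENNReal.toReal_ofReal (Real.exp_nonneg _), ← hα, ← hp] at this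
  have hpα : 0 < p / α := div_pos hppos hαpos
  rw [Real.le_log_iff_exp_le hpα, Real.log_le_iff_le_exp hpα, le_div_iff₀ hαpos,
    div_le_iff₀ hαpos]
  rw [Real.exp_neg] at upper lower
  exact ⟨(le_inv_mul_iff₀ (Real.exp_pos _)).1 upper, (inv_mul_le_iff₀ (Real.exp_pos _)).1 lower⟩
end

section
/- Let μ₀ be a probability measure on a measurable space Ω, let L : Ω → ℝ be measurable, let μ₁ := μ₀.withDensity (fun ω => ENNReal.ofReal (Real.exp (L ω))), and let B ∈ ℝ, Θ ≥ 0. Suppose for μ₀-almost every ω in the event E := {ω | L ω ≤ −B} one has −(B + Θ) ≤ L ω. Set β := (μ₁ E).toReal and q := (μ₀ E).toReal, and assume β > 0 and q > 0. Then B ≤ Real.log (q / β) ≤ B + Θ. -/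
open MeasureTheory

/-- Lower-threshold counterpart of the key quantitative step in Lemma 1: with undershoot
bounded by `Θ` on the stopping region `E = {L ≤ -B}`, the miss probability `β = μ₁(E)`
and `q = μ₀(E)` satisfy `B ≤ log(q/β) ≤ B + Θ`. -/
theorem sprt_lower_threshold_asymptotics {Ω : Type*} [MeasurableSpace Ω]
    (μ₀ : Measure Ω) [IsProbabilityMeasure μ₀] (L : Ω → ℝ) (hL : Measurable L)
    (μ₁ : Measure Ω)
    (hμ₁ : μ₁ = μ₀.withDensity (fun ω => ENNReal.ofReal (Real.exp (L ω))))
    (B Θ : ℝ) (hΘ : 0 ≤ Θ) (E : Set Ω) (hE : E = {ω | L ω ≤ -B})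
    (hunder : ∀ᵐ ω ∂μ₀, ω ∈ E → -(B + Θ) ≤ L ω)
    (β q : ℝ) (hβ : β = (μ₁ E).toReal) (hq : q = (μ₀ E).toReal)
    (hβpos : 0 < β) (hqpos : 0 < q) :
    B ≤ Real.log (q / β) ∧ Real.log (q / β) ≤ B + Θ := by
  have hEm : MeasurableSet E := hE ▸ measurableSet_le hL measurable_const
  have hμ₁E : μ₁ E = ∫⁻ ω in E, ENNReal.ofReal (Real.exp (L ω)) ∂μ₀ := by
    rw [hμ₁, withDensity_apply _ hEm]
  have hupper : μ₁ E ≤ ENNReal.ofReal (Real.exp (-B)) * μ₀ E := by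
    rw [hμ₁E, ← setLIntegral_const]
    refine setLIntegral_mono measurable_const fun ω hω => ?_
    rw [hE] at hω
    exact ENNReal.ofReal_le_ofReal (Real.exp_le_exp.2 hω)
  have hlower : ENNReal.ofReal (Real.exp (-(B + Θ))) * μ₀ E ≤ μ₁ E := by
    rw [hμ₁E, ← setLIntegral_const]
    refine setLIntegral_mono_ae' hEm ?_
    filter_upwards [hunder] with ω hω hωE
    exact ENNReal.ofReal_le_ofReal (Real.exp_le_exp.2 (hω hωE))
  have hfin : ENNReal.ofReal (Real.exp (-B)) * μ₀ E ≠ ⊤ :=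
    ENNReal.mul_ne_top ENNReal.ofReal_ne_top (measure_ne_top _ _)
  have hβ_le : β ≤ Real.exp (-B) * q := by
    have := ENNReal.toReal_mono hfin hupper
    rwa [ENNReal.toReal_mul, ENNReal.toReal_ofReal (Real.exp_pos _).le, ← hβ, ← hq] at this
  have hle_β : Real.exp (-(B + Θ)) * q ≤ β := by
    have := ENNReal.toReal_mono (ne_top_of_le_ne_top hfin hupper) hlower
    rwa [ENNReal.toReal_mul, ENNReal.toReal_ofReal (Real.exp_pos _).le, ← hβ, ← hq] at this
  have hlogβ_le := Real.log_le_log hβpos hβ_le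
  have hle_logβ := Real.log_le_log (mul_pos (Real.exp_pos _) hqpos) hle_β
  rw [Real.log_mul (Real.exp_pos _).ne' hqpos.ne', Real.log_exp] at hlogβ_le hle_logβ
  rw [Real.log_div hqpos.ne' hβpos.ne']
  constructor <;> linarith
end

section
/- Let α, β ∈ (0, 1/2) and ε ∈ (0, 1/2), and define α̂ := (1 − 2ε)·α + ε and β̂ := (1 − 2ε)·β + ε. Then 0 < Real.log ((1 − β̂) / α̂) < Real.log ((1 − β) / α) and Real.log (β / (1 − α)) < Real.log (β̂ / (1 − α̂)) < 0. -/
/-- Passing an error probability below `1/2` through a BSC strictly increases it, while keeping it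
below `1/2`. -/
lemma bsc_error_mem_Ioo {p ε : ℝ} (hp : p < 1/2) (hε : ε ∈ Set.Ioo (0 : ℝ) (1/2)) :
    (1 - 2*ε)*p + ε ∈ Set.Ioo p (1/2) := by
  obtain ⟨h0, h1⟩ := hε
  constructor <;> nlinarith

/-- Under a BSC with crossover probability `ε`, the magnitude of the LLR of each received
bit, computed from the effective error probabilities `α̂ = (1-2ε)α + ε` and
`β̂ = (1-2ε)β + ε`, is strictly smaller than the corresponding LLR magnitude under
ideal channels (or BEC), and both have the same sign. -/
theorem bsc_llr_smaller_than_bec (α β ε : ℝ)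
    (hα : α ∈ Set.Ioo (0 : ℝ) (1/2)) (hβ : β ∈ Set.Ioo (0 : ℝ) (1/2))
    (hε : ε ∈ Set.Ioo (0 : ℝ) (1/2)) :
    (0 < Real.log ((1 - ((1 - 2*ε)*β + ε)) / ((1 - 2*ε)*α + ε)) ∧
      Real.log ((1 - ((1 - 2*ε)*β + ε)) / ((1 - 2*ε)*α + ε)) < Real.log ((1 - β) / α)) ∧
    (Real.log (β / (1 - α)) < Real.log (((1 - 2*ε)*β + ε) / (1 - ((1 - 2*ε)*α + ε))) ∧
      Real.log (((1 - 2*ε)*β + ε) / (1 - ((1 - 2*ε)*α + ε))) < 0) := by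
  obtain ⟨hα0, hα1⟩ := hα
  obtain ⟨hβ0, hβ1⟩ := hβ
  obtain ⟨ha, ha'⟩ := bsc_error_mem_Ioo hα1 hε
  obtain ⟨hb, hb'⟩ := bsc_error_mem_Ioo hβ1 hε
  generalize (1 - 2*ε)*α + ε = a at *
  generalize (1 - 2*ε)*β + ε = b at *
  have ha0 : 0 < a := hα0.trans ha
  have hb0 : 0 < b := hβ0.trans hb
  have ha1 : 0 < 1 - a := by linarith
  have hb1 : 0 < 1 - b := by linarith
  refine ⟨⟨Real.log_pos ?_, Real.log_lt_log (by positivity) ?_⟩,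
    Real.log_lt_log (div_pos hβ0 (by linarith)) ?_, Real.log_neg (by positivity) ?_⟩
  · rw [one_lt_div ha0]
    linarith
  · exact div_lt_div₀ (by linarith) ha.le (by linarith) hα0
  · exact div_lt_div₀ hb (by linarith) hb0.le ha1
  · rw [div_lt_one ha1]
    linarith
end

section
/- Let F, G ∈ ℝ with F > 1, G > 1, F² ≥ G, and G² ≥ F. Define C₁ : ℝ → ℝ by C₁(s) = ∫ ν, (Real.log ((1 + G·Real.exp (−s² + √2·s·ν)) / (1 + F⁻¹·Real.exp (−s² + √2·s·ν))) + G·Real.log ((1 + G⁻¹·Real.exp (−s² − √2·s·ν)) / (1 + F·Real.exp (−s² − √2·s·ν)))) ∂(gaussianReal 0 1). Then C₁ is strictly increasing on (0, ∞). -/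
open MeasureTheory ProbabilityTheory

/-- The channel penalty term under `H₁` for an AWGN channel, as a function of the
normalized signaling separation `s`, where `F = (1-α)/α` and `G = (1-β)/β`. -/
noncomputable def awgnPenaltyH1 (F G : ℝ) (s : ℝ) : ℝ :=
  ∫ ν, (Real.log ((1 + G * Real.exp (-s^2 + Real.sqrt 2 * s * ν)) /
          (1 + F⁻¹ * Real.exp (-s^2 + Real.sqrt 2 * s * ν)))
      + G * Real.log ((1 + G⁻¹ * Real.exp (-s^2 - Real.sqrt 2 * s * ν)) /
          (1 + F * Real.exp (-s^2 - Real.sqrt 2 * s * ν)))) ∂(gaussianReal 0 1)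

open scoped NNReal MeasureTheory

namespace MeasureTheory

lemma integral_lt_integral_of_ae_lt {α : Type*} {mα : MeasurableSpace α} {μ : Measure α}
    [NeZero μ] {f g : α → ℝ} (hf : Integrable f μ) (hg : Integrable g μ)
    (h : ∀ᵐ x ∂μ, f x < g x) : ∫ x, f x ∂μ < ∫ x, g x ∂μ := by
  rw [← sub_pos, ← integral_sub hg hf, integral_pos_iff_support_of_nonneg_ae
    (h.mono fun x hx => (sub_pos.2 hx).le) (hg.sub hf), pos_iff_ne_zero]
  intro h0
  refine NeZero.ne μ (ae_eq_bot.1 (Filter.empty_mem_iff_bot.1 ?_))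
  filter_upwards [h, measure_eq_zero_iff_ae_notMem.1 h0] with x hx hx'
  exact hx' (sub_pos.2 hx).ne'

end MeasureTheory

namespace ProbabilityTheory

lemma gaussianPDFReal_half_var (v : ℝ≥0) (x : ℝ) :
    gaussianPDFReal (v / 2) v x = Real.exp x * gaussianPDFReal (-(v / 2)) v x := by
  by_cases hv : v = 0
  · simp [hv]
  have hv' : (v : ℝ) ≠ 0 := by exact_mod_cast hv
  rw [gaussianPDFReal, gaussianPDFReal, mul_left_comm, ← Real.exp_add]
  congr 2
  field

/-- Exponential tilting of a Gaussian with mean `-v / 2` shifts its mean to `v / 2`. -/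
lemma integral_gaussianReal_half_var {v : ℝ≥0} (hv : v ≠ 0) (f : ℝ → ℝ) :
    ∫ x, f x ∂gaussianReal (v / 2) v =
      ∫ x, Real.exp x * f x ∂gaussianReal (-(v / 2)) v := by
  simp_rw [integral_gaussianReal_eq_integral_smul hv, gaussianPDFReal_half_var, smul_eq_mul]
  exact integral_congr_ae (.of_forall fun x => by ring)

lemma integrable_exp_gaussianReal (m : ℝ) (v : ℝ≥0) :
    Integrable Real.exp (gaussianReal m v) := by
  simpa using integrable_exp_mul_gaussianReal (μ := m) (v := v) 1

lemma integral_exp_gaussianReal_neg_half_var (v : ℝ≥0) :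
    ∫ x, Real.exp x ∂gaussianReal (-(v / 2)) v = 1 := by
  have := congrFun (mgf_fun_id_gaussianReal (μ := -(v / 2)) (v := v)) 1
  simpa [mgf] using this

end ProbabilityTheory

/-- The log-likelihood ratio, up to constants, at channel likelihood ratio `x`. -/
noncomputable def awgnLogRatio (F G x : ℝ) : ℝ := Real.log ((1 + G * x) / (F + x))

section

variable {F G : ℝ}

lemma abs_awgnLogRatio_le (hF : 1 < F) (hG : 1 < G) {x : ℝ} (hx : 0 < x) :
    |awgnLogRatio F G x| ≤ Real.log F + Real.log G := by
  have hlF := Real.log_pos hF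
  have hlG := Real.log_pos hG
  have hlow : -Real.log F ≤ awgnLogRatio F G x := by
    rw [← Real.log_inv]
    refine Real.log_le_log (by positivity) ?_
    rw [inv_eq_one_div, div_le_div_iff₀ (by positivity) (by positivity)]
    nlinarith [mul_pos (sub_pos.2 hF) hx, mul_pos (mul_pos (sub_pos.2 hG) hx) (by linarith : 0 < F)]
  have hupp : awgnLogRatio F G x ≤ Real.log G := by
    refine Real.log_le_log (by positivity) ?_
    rw [div_le_iff₀ (by positivity)]
    nlinarith
  exact abs_le.2 ⟨by linarith, by linarith⟩

@[fun_prop]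
lemma measurable_awgnLogRatio : Measurable (awgnLogRatio F G) := by
  unfold awgnLogRatio
  fun_prop

lemma integrable_awgnLogRatio_comp (hF : 1 < F) (hG : 1 < G) {μ : Measure ℝ} [IsFiniteMeasure μ]
    {g : ℝ → ℝ} (hg : Measurable g) (hpos : ∀ x, 0 < g x) :
    Integrable (fun x => awgnLogRatio F G (g x)) μ :=
  .of_bound (Measurable.aestronglyMeasurable (by fun_prop)) (Real.log F + Real.log G)
    (.of_forall fun x => abs_awgnLogRatio_le hF hG (hpos x))

lemma integrable_mul_awgnLogRatio (hF : 1 < F) (hG : 1 < G) {m : ℝ} {v : ℝ≥0} (c d : ℝ) :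
    Integrable (fun x => (1 + d * Real.exp (c + x)) * awgnLogRatio F G (Real.exp (c + x)))
      (gaussianReal m v) := by
  refine Integrable.mul_bdd (c := Real.log F + Real.log G) ?_
    (Measurable.aestronglyMeasurable (by fun_prop))
    (.of_forall fun x => abs_awgnLogRatio_le hF hG (Real.exp_pos _))
  simp_rw [Real.exp_add]
  exact (integrable_const _).add
    (((integrable_exp_gaussianReal m v).const_mul _).const_mul _)

/-- The tangent line of `x ↦ (1 + G x) log ((1 + G x) / (F + x))` at `x` lies strictly below it
away from `x`. -/
lemma awgn_tangent_lt (hF : 1 < F) (hG : 1 < G) {x y : ℝ} (hx : 0 < x) (hy : 0 < y)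
    (hxy : y ≠ x) :
    (1 + G * y) * awgnLogRatio F G x + (1 + G * y) - (F + y) * ((1 + G * x) / (F + x)) <
      (1 + G * y) * awgnLogRatio F G y := by
  have hFx : 0 < F + x := by linarith
  have hFy : 0 < F + y := by linarith
  have hGx : 0 < 1 + G * x := by positivity
  have hGy : 0 < 1 + G * y := by positivity
  set p := (1 + G * y) / (F + y) with hp
  set q := (1 + G * x) / (F + x) with hq
  have hp0 : 0 < p := by positivity
  have hq0 : 0 < q := by positivity
  have hne : q / p ≠ 1 := by
    rw [Ne, div_eq_one_iff_eq hp0.ne', hp, hq, div_eq_div_iff hFx.ne' hFy.ne']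
    intro h
    have : (G * F - 1) * (y - x) = 0 := by linarith
    rcases mul_eq_zero.1 this with h | h
    · nlinarith
    · exact hxy (by linarith)
  have hlog := Real.log_lt_sub_one_of_pos (div_pos hq0 hp0) hne
  rw [Real.log_div hq0.ne' hp0.ne'] at hlog
  have hmul := mul_lt_mul_of_pos_left hlog hGy
  have hcancel : (1 + G * y) * (q / p) = (F + y) * q := by
    rw [hp]
    field
  change (1 + G * y) * Real.log q + _ - _ < (1 + G * y) * Real.log p
  linarith

lemma awgn_lt_integral (hF : 1 < F) (hG : 1 < G) {w : ℝ≥0} (hw : w ≠ 0) (x : ℝ) :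
    (1 + G * Real.exp x) * awgnLogRatio F G (Real.exp x) <
      ∫ y, (1 + G * Real.exp (x + y)) * awgnLogRatio F G (Real.exp (x + y))
        ∂gaussianReal (-(w / 2)) w := by
  set q := (1 + G * Real.exp x) / (F + Real.exp x) with hq
  set l := awgnLogRatio F G (Real.exp x) with hl
  have hFx : F + Real.exp x ≠ 0 := by positivity
  have hint := (integrable_exp_gaussianReal (-(w / 2)) w).mul_const
    (G * Real.exp x * (l + 1) - Real.exp x * q)
  have hint' := hint.add (integrable_const (l + 1 - F * q))
  have hmean : ∫ y, (Real.exp y * (G * Real.exp x * (l + 1) - Real.exp x * q) + (l + 1 - F * q))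
      ∂gaussianReal (-(w / 2)) w = (1 + G * Real.exp x) * l := by
    rw [integral_add hint (integrable_const _), integral_mul_const,
      integral_exp_gaussianReal_neg_half_var]
    simp only [integral_const, probReal_univ, smul_eq_mul]
    have : q * (F + Real.exp x) = 1 + G * Real.exp x := div_mul_cancel₀ _ hFx
    linarith
  rw [← hmean]
  have := nullSingletonClass_gaussianReal (μ := -(w / 2)) hw
  refine integral_lt_integral_of_ae_lt hint' (integrable_mul_awgnLogRatio hF hG x G) ?_
  filter_upwards [compl_mem_ae_iff.2 (measure_singleton (0 : ℝ))] with y hy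
  have hne : Real.exp (x + y) ≠ Real.exp x := by simpa using hy
  have := awgn_tangent_lt hF hG (Real.exp_pos x) (Real.exp_pos (x + y)) hne
  rw [← hl, ← hq] at this
  refine lt_of_eq_of_lt ?_ this
  rw [Real.exp_add]
  ring

lemma strictMono_integral_awgn (hF : 1 < F) (hG : 1 < G) :
    StrictMono fun v : ℝ≥0 => ∫ x, (1 + G * Real.exp x) * awgnLogRatio F G (Real.exp x)
      ∂gaussianReal (-(v / 2)) v := by
  intro v v' hv
  obtain ⟨w, rfl⟩ := exists_add_of_le hv.le
  have hw : w ≠ 0 := by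
    rintro rfl
    simp at hv
  have hint (u : ℝ≥0) : Integrable
      (fun x => (1 + G * Real.exp x) * awgnLogRatio F G (Real.exp x))
      (gaussianReal (-(u / 2)) u) := by
    simpa using integrable_mul_awgnLogRatio hF hG (m := -(u / 2)) (v := u) 0 G
  have hconv : gaussianReal (-((v + w : ℝ≥0) / 2)) (v + w) =
      gaussianReal (-(v / 2)) v ∗ gaussianReal (-(w / 2)) w := by
    rw [gaussianReal_conv_gaussianReal]
    congr 1
    push_cast
    ring
  have hint' := hint (v + w)
  beta_reduce
  rw [hconv] at hint' ⊢
  rw [integral_conv hint']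
  refine integral_lt_integral_of_ae_lt (hint v) ?_
    (.of_forall fun x => awgn_lt_integral hF hG hw x)
  rw [Measure.conv, integrable_map_measure hint'.1 (by fun_prop)] at hint'
  exact hint'.integral_prod_left

lemma awgnPenaltyH1_eq (hF : 1 < F) (hG : 1 < G) {s : ℝ} (hs : 0 < s) :
    awgnPenaltyH1 F G s = ∫ x, (1 + G * Real.exp x) * awgnLogRatio F G (Real.exp x)
      ∂gaussianReal (-((2 * s ^ 2).toNNReal / 2)) (2 * s ^ 2).toNNReal +
        (Real.log F - G * Real.log G) := by
  set v := (2 * s ^ 2).toNNReal with hv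
  have hvs : (v : ℝ) = 2 * s ^ 2 := Real.coe_toNNReal _ (by positivity)
  have hv0 : v ≠ 0 := by
    rw [hv, Ne, Real.toNNReal_eq_zero, not_le]
    positivity
  have hlaw (m : ℝ) : (gaussianReal 0 1).map (fun ν => m + Real.sqrt 2 * s * ν) =
      gaussianReal m v := by
    have : (fun ν => m + Real.sqrt 2 * s * ν) = (m + ·) ∘ (Real.sqrt 2 * s * ·) := rfl
    rw [this, ← Measure.map_map (by fun_prop) (by fun_prop), gaussianReal_map_const_mul,
      gaussianReal_map_const_add]
    congr 1
    · simp
    · ext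
      simp [hvs, mul_pow]
  have hchange (m : ℝ) : ∫ ν, awgnLogRatio F G (Real.exp (m + Real.sqrt 2 * s * ν))
      ∂gaussianReal 0 1 = ∫ x, awgnLogRatio F G (Real.exp x) ∂gaussianReal m v := by
    rw [← hlaw m, integral_map (by fun_prop)
      (Measurable.aestronglyMeasurable (by fun_prop))]
  have hint (m : ℝ) : Integrable
      (fun ν => awgnLogRatio F G (Real.exp (m + Real.sqrt 2 * s * ν))) (gaussianReal 0 1) :=
    integrable_awgnLogRatio_comp hF hG (by fun_prop) fun _ => Real.exp_pos _
  have hF0 : 0 < F := by linarith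
  have hG0 : 0 < G := by linarith
  have hpt (ν : ℝ) : Real.log ((1 + G * Real.exp (-s ^ 2 + Real.sqrt 2 * s * ν)) /
          (1 + F⁻¹ * Real.exp (-s ^ 2 + Real.sqrt 2 * s * ν)))
      + G * Real.log ((1 + G⁻¹ * Real.exp (-s ^ 2 - Real.sqrt 2 * s * ν)) /
          (1 + F * Real.exp (-s ^ 2 - Real.sqrt 2 * s * ν))) =
      awgnLogRatio F G (Real.exp (-s ^ 2 + Real.sqrt 2 * s * ν)) +
        G * awgnLogRatio F G (Real.exp (s ^ 2 + Real.sqrt 2 * s * ν)) +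
        (Real.log F - G * Real.log G) := by
    have hinv : -s ^ 2 - Real.sqrt 2 * s * ν = -(s ^ 2 + Real.sqrt 2 * s * ν) := by ring
    rw [hinv, Real.exp_neg]
    generalize hx : Real.exp (-s ^ 2 + Real.sqrt 2 * s * ν) = x
    generalize hy : Real.exp (s ^ 2 + Real.sqrt 2 * s * ν) = y
    have hx0 : 0 < x := hx ▸ Real.exp_pos _
    have hy0 : 0 < y := hy ▸ Real.exp_pos _
    have h₁ : (1 + G * x) / (1 + F⁻¹ * x) = (1 + G * x) / (F + x) * F := by
      field_simp
    have h₂ : (1 + G⁻¹ * y⁻¹) / (1 + F * y⁻¹) = (1 + G * y) / (F + y) / G := by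
      field_simp
      ring
    rw [h₁, h₂, Real.log_mul (by positivity) hF0.ne', Real.log_div (by positivity) hG0.ne',
      awgnLogRatio, awgnLogRatio]
    ring
  have hhalf : (v : ℝ) / 2 = s ^ 2 := by rw [hvs]; ring
  have hexp : Integrable (fun x => Real.exp x * awgnLogRatio F G (Real.exp x))
      (gaussianReal (-(v / 2)) v) :=
    (integrable_exp_gaussianReal _ _).mul_bdd (c := Real.log F + Real.log G)
      (Measurable.aestronglyMeasurable (by fun_prop))
      (.of_forall fun x => abs_awgnLogRatio_le hF hG (Real.exp_pos _))
  unfold awgnPenaltyH1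
  simp_rw [hpt]
  rw [integral_add ((hint _).fun_add ((hint _).const_mul G)) (integrable_const _),
    integral_add (hint _) ((hint _).const_mul G), integral_const_mul, hchange, hchange, ← hhalf,
    integral_gaussianReal_half_var hv0, ← integral_const_mul, ← integral_add
      (integrable_awgnLogRatio_comp hF hG Real.measurable_exp Real.exp_pos) (hexp.const_mul G)]
  simp only [integral_const, probReal_univ, one_smul]
  congr 2
  ext x
  ring

end

/-- Lemma 2 of the paper, `H₁` case: if `F, G > 1`, `F² ≥ G` and `G² ≥ F`, then the AWGN
channel penalty term `C₁` is strictly increasing in the signaling separation `s > 0`. -/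
theorem awgnPenaltyH1_strictMonoOn (F G : ℝ) (hF : 1 < F) (hG : 1 < G)
    (hF2G : G ≤ F^2) (hG2F : F ≤ G^2) :
    StrictMonoOn (awgnPenaltyH1 F G) (Set.Ioi (0 : ℝ)) := by
  intro s hs t ht hst
  have hs' : 0 < s := hs
  have ht' : 0 < t := ht
  rw [awgnPenaltyH1_eq hF hG hs', awgnPenaltyH1_eq hF hG ht']
  refine add_lt_add_left (strictMono_integral_awgn hF hG ?_) _
  exact (Real.toNNReal_lt_toNNReal_iff (by positivity)).2 (by gcongr)
end

section
/- Let F, G ∈ ℝ with F > 1, G > 1, and G² ≥ F. Define g : ℝ → ℝ by g(x) = ((F/G − G)·exp(2x) + (F·G + 1)·(G⁻¹ − 1)·exp x + (1 − F)) / ((1 + G·exp x)·(1 + F⁻¹·exp x)·(1 + G⁻¹·exp x)·(1 + F·exp x)). Then for all p, q ∈ ℝ with p > q and p + q > 0, one has g(p) > g(q). -/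
open Real

/-- For `c > 0`, the function `(1 + c x) (1 + c⁻¹ x) / x` is at least as large at `a` as at `b`
if `0 < b < a` and `a b > 1`. -/
lemma mul_reciprocal_factors_le {a b c : ℝ} (hc : 0 < c) (hba : b < a) (hab : 1 < a * b) :
    a * ((1 + c * b) * (1 + c⁻¹ * b)) ≤ b * ((1 + c * a) * (1 + c⁻¹ * a)) := by
  have hcc : c * c⁻¹ = 1 := mul_inv_cancel₀ hc.ne'
  have key : b * ((1 + c * a) * (1 + c⁻¹ * a)) - a * ((1 + c * b) * (1 + c⁻¹ * b))
      = (a - b) * (a * b - 1) := by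
    linear_combination (a ^ 2 * b - a * b ^ 2) * hcc
  have := mul_pos (sub_pos.2 hba) (sub_pos.2 hab)
  linarith

/-- A quadratic with positive linear and constant coefficients, divided by `x ^ 2`, is
strictly decreasing on the positive reals. -/
lemma sq_mul_quadratic_lt {A B C a b : ℝ} (hB : 0 < B) (hC : 0 < C) (hb : 0 < b)
    (hba : b < a) :
    b ^ 2 * (A * a ^ 2 + B * a + C) < a ^ 2 * (A * b ^ 2 + B * b + C) := by
  have ha : 0 < a := hb.trans hba
  have hd : 0 < a - b := sub_pos.2 hba
  have : 0 < B * (a * b) * (a - b) + C * ((a - b) * (a + b)) := by positivity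
  linarith

/-- The pointwise sufficient inequality (app:aw3) in the Appendix proof of Lemma 2:
the function `g` below satisfies `g p > g q` whenever `p > q` and `p + q > 0`,
for `F, G > 1` with `G² ≥ F`. -/
theorem appendix_pointwise_inequality (F G : ℝ) (hF : 1 < F) (hG : 1 < G)
    (hG2F : F ≤ G^2)
    (g : ℝ → ℝ)
    (hg : g = fun x =>
      ((F/G - G) * exp (2*x) + (F*G + 1) * (G⁻¹ - 1) * exp x + (1 - F)) /
        ((1 + G * exp x) * (1 + F⁻¹ * exp x) * (1 + G⁻¹ * exp x) * (1 + F * exp x))) :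
    ∀ p q : ℝ, q < p → 0 < p + q → g q < g p := by
  intro p q hqp hpq
  have hF0 : 0 < F := one_pos.trans hF
  have hG0 : 0 < G := one_pos.trans hG
  have hexp (x : ℝ) : exp (2 * x) = exp x ^ 2 := by rw [two_mul, exp_add, sq]
  have hba : exp q < exp p := exp_lt_exp.2 hqp
  have hab : 1 < exp p * exp q := by rw [← exp_add]; exact one_lt_exp_iff.2 hpq
  have hb := exp_pos q
  have ha := exp_pos p
  simp only [hg, hexp]
  generalize exp p = a at *
  generalize exp q = b at *
  have hA : 0 ≤ G - F / G := by
    rw [sub_nonneg, div_le_iff₀ hG0]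
    linarith
  have hB : 0 < (F * G + 1) * (1 - G⁻¹) :=
    mul_pos (by positivity) (sub_pos.2 (inv_lt_one_of_one_lt₀ hG))
  have hC : 0 < F - 1 := sub_pos.2 hF
  have hden := mul_le_mul (mul_reciprocal_factors_le hG0 hba hab)
    (mul_reciprocal_factors_le hF0 hba hab) (by positivity) (by positivity)
  have hnum := sq_mul_quadratic_lt (A := G - F / G) hB hC hb hba
  have hprod := mul_lt_mul hnum hden (by positivity) (by positivity)
  rw [div_lt_div_iff₀ (by positivity) (by positivity)]
  refine lt_of_mul_lt_mul_left ?_ (by positivity : 0 ≤ a ^ 2 * b ^ 2)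
  linarith
end
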